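/- arXiv:2605.20122 — 2 statements merged into one kernel-verified Lean document; each statement's English description precedes it below -/
import Mathlib

section
/- Let d ≥ 1 be an integer, 0 < α < 1, and let B, M, C > 0. Let ℓ : (0,1)^d → ℝ^d be measurable with ‖ℓ(x)‖ ≤ B for all x and with α-Hölder seminorm at most M, and let μ : (0,1)^d → ℝ be measurable with 0 ≤ μ(x) ≤ C for all x and with α-Hölder seminorm at most C. Then there exists a constant K > 0, depending only on d, B, M, C and α, such that for every h ∈ (0,1] with 1/h a positive integer, |∫_{(0,1)^d} ⟨ℓ(x), x − G_h(x)⟩ μ(x) dx| ≤ K·h^{1+α}, where the integral is with respect to Lebesgue measure. -/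
open MeasureTheory
open scoped ENNReal RealInnerProductSpace

noncomputable section

abbrev Euc (d : ℕ) := EuclideanSpace ℝ (Fin d)

/-- The open unit cube `(0,1)^d`. -/
def unitCube (d : ℕ) : Set (Euc d) := {x | ∀ i, x i ∈ Set.Ioo (0 : ℝ) 1}

/-- `G_h` : map each point to the center of the axis-aligned grid cell
(of side length `h`) containing it. -/
def gridSnap (d : ℕ) (h : ℝ) (x : Euc d) : Euc d :=
  (EuclideanSpace.equiv (Fin d) ℝ).symm fun i => h * ⌊x i / h⌋ + h / 2

/-- Couplings of two Borel (probability) measures: probability measures on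
the product with the prescribed marginals. -/
def Couplings {d : ℕ} (P Q : Measure (Euc d)) : Set (Measure (Euc d × Euc d)) :=
  {γ | IsProbabilityMeasure γ ∧ γ.map Prod.fst = P ∧ γ.map Prod.snd = Q}

/-- Squared 2-Wasserstein distance. -/
def W2sq {d : ℕ} (P Q : Measure (Euc d)) : ℝ :=
  sInf {r | ∃ γ ∈ Couplings P Q, r = ∫ p, ‖p.1 - p.2‖ ^ 2 ∂γ}

/-- 2-Wasserstein distance. -/
def W2 {d : ℕ} (P Q : Measure (Euc d)) : ℝ := Real.sqrt (W2sq P Q)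

/-- `P` and `Q` are `(α, C)`-controlled probability measures on `(0,1)^d`:
they possess densities `μ, ν` w.r.t. Lebesgue measure on `(0,1)^d` whose
`α`-Hölder seminorms sum to at most `C`, and which are bounded between
`C⁻¹` and `C`. -/
def IsControlled (d : ℕ) (α C : ℝ) (P Q : Measure (Euc d)) : Prop :=
  ∃ μ ν : Euc d → ℝ,
    P = (volume.restrict (unitCube d)).withDensity (fun x => ENNReal.ofReal (μ x)) ∧
    Q = (volume.restrict (unitCube d)).withDensity (fun x => ENNReal.ofReal (ν x)) ∧
    (∃ Cμ Cν : ℝ, 0 ≤ Cμ ∧ 0 ≤ Cν ∧ Cμ + Cν ≤ C ∧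
      (∀ x ∈ unitCube d, ∀ y ∈ unitCube d, |μ x - μ y| ≤ Cμ * ‖x - y‖ ^ α) ∧
      (∀ x ∈ unitCube d, ∀ y ∈ unitCube d, |ν x - ν y| ≤ Cν * ‖x - y‖ ^ α)) ∧
    (∀ x ∈ unitCube d, C⁻¹ ≤ μ x ∧ μ x ≤ C) ∧
    (∀ x ∈ unitCube d, C⁻¹ ≤ ν x ∧ ν x ≤ C)

/-- Reflection of the real line about the midpoint of each cell `[k h, (k + 1) h)`. -/
def cellReflect (h t : ℝ) : ℝ := h * (2 * ⌊t / h⌋ + 1) - t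

/-- Coordinatewise reflection about the centers of the grid cells of side length `h`. -/
def gridReflect (d : ℕ) (h : ℝ) (x : Euc d) : Euc d :=
  WithLp.toLp 2 fun i => cellReflect h (x i)

theorem gridSnap_apply (d : ℕ) (h : ℝ) (x : Euc d) (i : Fin d) :
    gridSnap d h x i = h * ⌊x i / h⌋ + h / 2 := rfl

theorem gridReflect_apply (d : ℕ) (h : ℝ) (x : Euc d) (i : Fin d) :
    gridReflect d h x i = cellReflect h (x i) := rfl

theorem mul_floor_div_le {h : ℝ} (hh : 0 < h) (t : ℝ) : h * ⌊t / h⌋ ≤ t := by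
  have := (le_div_iff₀ hh).1 (Int.floor_le (t / h))
  linarith

theorem lt_mul_floor_div_add_one {h : ℝ} (hh : 0 < h) (t : ℝ) : t < h * (⌊t / h⌋ + 1) := by
  have := (div_lt_iff₀ hh).1 (Int.lt_floor_add_one (t / h))
  linarith

theorem floor_div_eq_iff {h : ℝ} (hh : 0 < h) (t : ℝ) (k : ℤ) :
    ⌊t / h⌋ = k ↔ h * k ≤ t ∧ t < h * (k + 1) := by
  rw [Int.floor_eq_iff, le_div_iff₀ hh, div_lt_iff₀ hh, mul_comm h, mul_comm h]

theorem cellReflect_mem_Ioc_iff {h : ℝ} (hh : 0 < h) (t : ℝ) (k : ℤ) :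
    cellReflect h t ∈ Set.Ioc (h * k) (h * (k + 1)) ↔ ⌊t / h⌋ = k := by
  have h1 := mul_floor_div_le hh t
  have h2 := lt_mul_floor_div_add_one hh t
  constructor
  · rintro ⟨h3, h4⟩
    unfold cellReflect at h3 h4
    have h5 : (k : ℝ) < ⌊t / h⌋ + 1 := lt_of_mul_lt_mul_left (by linarith) hh.le
    have h6 : (⌊t / h⌋ : ℝ) < k + 1 := lt_of_mul_lt_mul_left (by linarith) hh.le
    have h5' : k < ⌊t / h⌋ + 1 := by exact_mod_cast h5
    have h6' : ⌊t / h⌋ < k + 1 := by exact_mod_cast h6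
    omega
  · rintro rfl
    unfold cellReflect
    constructor <;> linarith

theorem measurable_cellReflect (h : ℝ) : Measurable (cellReflect h) := by
  unfold cellReflect
  fun_prop

theorem measurePreserving_cellReflect {h : ℝ} (hh : 0 < h) :
    MeasurePreserving (cellReflect h) := by
  refine ⟨measurable_cellReflect h, ?_⟩
  have hU : ⋃ k : ℤ, Set.Ioc (h * k) (h * (k + 1)) = Set.univ := by
    simpa [mul_comm h] using iUnion_Ioc_zsmul hh
  refine Measure.ext_of_iUnion_eq_univ hU fun k => ?_
  ext A hA
  have hm : MeasurableSet (A ∩ Set.Ioc (h * k) (h * (k + 1))) := hA.inter measurableSet_Ioc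
  rw [Measure.restrict_apply hA, Measure.restrict_apply hA,
    Measure.map_apply (measurable_cellReflect h) hm,
    ← (Measure.measurePreserving_sub_left volume (h * (2 * k + 1))).measure_preimage
      hm.nullMeasurableSet]
  congr 1
  ext t
  by_cases hk : ⌊t / h⌋ = k
  · simp only [Set.mem_preimage, cellReflect, hk]
  · have hr : cellReflect h t ∉ Set.Ioc (h * k) (h * (k + 1)) :=
      fun hmem => hk ((cellReflect_mem_Ioc_iff hh t k).1 hmem)
    have hs : h * (2 * k + 1) - t ∉ Set.Ioc (h * k) (h * (k + 1)) := by
      rintro ⟨h1, h2⟩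
      exact hk ((floor_div_eq_iff hh t k).2 ⟨by linarith, by linarith⟩)
    simp only [Set.mem_preimage, Set.mem_inter_iff, hr, hs, and_false]

theorem measurePreserving_gridReflect (d : ℕ) {h : ℝ} (hh : 0 < h) :
    MeasurePreserving (gridReflect d h) :=
  (PiLp.volume_preserving_toLp (Fin d)).comp
    ((volume_preserving_pi fun _ => measurePreserving_cellReflect hh).comp
      (PiLp.volume_preserving_ofLp (Fin d)))

theorem cellReflect_mem_Ioc_zero_one_iff {h : ℝ} (hh : 0 < h) {L : ℕ} (hL : h * L = 1) (t : ℝ) :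
    cellReflect h t ∈ Set.Ioc (0 : ℝ) 1 ↔ t ∈ Set.Ico (0 : ℝ) 1 := by
  have h1 := mul_floor_div_le hh t
  have h2 := lt_mul_floor_div_add_one hh t
  have lower {n : ℤ} (hn : 0 < h * ((n : ℝ) + 1)) : 0 ≤ h * (n : ℝ) := by
    have h3 : (0 : ℝ) < n + 1 := pos_of_mul_pos_right hn hh.le
    have h4 : 0 < n + 1 := by exact_mod_cast h3
    have h5 : (0 : ℝ) ≤ n := by exact_mod_cast Int.lt_add_one_iff.1 h4
    positivity
  have upper {n : ℤ} (hn : h * (n : ℝ) < 1) : h * ((n : ℝ) + 1) ≤ 1 := by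
    have h3 : (n : ℝ) < L := lt_of_mul_lt_mul_left (hn.trans_eq hL.symm) hh.le
    have h4 : n < (L : ℤ) := by exact_mod_cast h3
    have h5 : (n : ℝ) + 1 ≤ L := by exact_mod_cast h4
    exact (mul_le_mul_of_nonneg_left h5 hh.le).trans_eq hL
  unfold cellReflect
  constructor
  · rintro ⟨h3, h4⟩
    have := lower (n := ⌊t / h⌋) (by linarith)
    have := upper (n := ⌊t / h⌋) (by linarith)
    constructor <;> linarith
  · rintro ⟨h3, h4⟩
    have := lower (n := ⌊t / h⌋) (by linarith)
    have := upper (n := ⌊t / h⌋) (by linarith)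
    constructor <;> linarith

theorem ae_coord {d : ℕ} {p : ℝ → Prop} (hp : ∀ᵐ t, p t) : ∀ᵐ x : Euc d, ∀ i, p (x i) := by
  refine ae_all_iff.2 fun i => ?_
  exact ((Measure.quasiMeasurePreserving_eval (fun _ : Fin d => (volume : Measure ℝ)) i).comp
    (PiLp.volume_preserving_ofLp (Fin d)).quasiMeasurePreserving).ae hp

theorem ae_ne_mul_intCast (h : ℝ) : ∀ᵐ t : ℝ, ∀ k : ℤ, t ≠ h * k :=
  ae_all_iff.2 fun k => Measure.ae_ne volume (h * k)

theorem measurableSet_unitCube (d : ℕ) : MeasurableSet (unitCube d) := by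
  have : unitCube d = ⋂ i, (fun x : Euc d => x i) ⁻¹' Set.Ioo (0 : ℝ) 1 := by
    ext x; simp [unitCube]
  rw [this]
  exact MeasurableSet.iInter fun i => measurableSet_Ioo.preimage (by fun_prop)

theorem volume_unitCube (d : ℕ) : volume (unitCube d) = 1 := by
  have h1 : unitCube d = (WithLp.ofLp : Euc d → Fin d → ℝ) ⁻¹'
      Set.univ.pi fun _ => Set.Ioo (0 : ℝ) 1 := by
    ext x; simp [unitCube]
  rw [h1, (PiLp.volume_preserving_ofLp (Fin d)).measure_preimage
    (MeasurableSet.univ_pi fun _ => measurableSet_Ioo).nullMeasurableSet, Real.volume_pi_Ioo]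
  simp

theorem gridReflect_preimage_unitCube_ae_eq (d : ℕ) {h : ℝ} (hh : 0 < h) {L : ℕ}
    (hL : h * L = 1) : gridReflect d h ⁻¹' unitCube d =ᵐ[volume] unitCube d := by
  filter_upwards [ae_coord (d := d) (ae_ne_mul_intCast h)] with x hx
  refine propext (forall_congr' fun i => ?_)
  rw [gridReflect_apply]
  have key := cellReflect_mem_Ioc_zero_one_iff hh hL (x i)
  have h0 : x i ≠ 0 := by simpa using hx i 0
  constructor
  · rintro ⟨h1, h2⟩
    obtain ⟨h3, h4⟩ := key.1 ⟨h1, h2.le⟩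
    exact ⟨h3.lt_of_ne' h0, h4⟩
  · rintro ⟨h1, h2⟩
    obtain ⟨h3, h4⟩ := key.2 ⟨h1.le, h2⟩
    refine ⟨h3, h4.lt_of_ne fun h5 => hx i (2 * ⌊x i / h⌋ + 1 - L) ?_⟩
    unfold cellReflect at h5
    push_cast
    linarith

theorem measurePreserving_gridReflect_unitCube (d : ℕ) {h : ℝ} (hh : 0 < h) {L : ℕ}
    (hL : h * L = 1) :
    MeasurePreserving (gridReflect d h) (volume.restrict (unitCube d))
      (volume.restrict (unitCube d)) := by
  have := (measurePreserving_gridReflect d hh).restrict_preimage (measurableSet_unitCube d)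
  rwa [Measure.restrict_congr_set (gridReflect_preimage_unitCube_ae_eq d hh hL)] at this

theorem gridSnap_gridReflect_ae_eq (d : ℕ) {h : ℝ} (hh : 0 < h) :
    ∀ᵐ x : Euc d, gridSnap d h (gridReflect d h x) = gridSnap d h x := by
  filter_upwards [ae_coord (d := d) (ae_ne_mul_intCast h)] with x hx
  ext i
  have h1 := (mul_floor_div_le hh (x i)).lt_of_ne' (hx i _)
  have h2 := lt_mul_floor_div_add_one hh (x i)
  have : ⌊cellReflect h (x i) / h⌋ = ⌊x i / h⌋ := by
    rw [floor_div_eq_iff hh]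
    unfold cellReflect
    constructor <;> linarith
  rw [gridSnap_apply, gridSnap_apply, gridReflect_apply, this]

theorem sub_gridReflect (d : ℕ) (h : ℝ) (x : Euc d) :
    x - gridReflect d h x = (2 : ℝ) • (x - gridSnap d h x) := by
  ext i
  simp only [PiLp.sub_apply, PiLp.smul_apply, smul_eq_mul, gridReflect_apply, gridSnap_apply,
    cellReflect]
  ring

theorem norm_sub_gridSnap_le (d : ℕ) {h : ℝ} (hh : 0 < h) (x : Euc d) :
    ‖x - gridSnap d h x‖ ≤ √d * (h / 2) := by
  have hi (i : Fin d) : ‖(x - gridSnap d h x) i‖ ^ 2 ≤ (h / 2) ^ 2 := by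
    have h1 := mul_floor_div_le hh (x i)
    have h2 := lt_mul_floor_div_add_one hh (x i)
    rw [Real.norm_eq_abs, sq_abs, PiLp.sub_apply, gridSnap_apply]
    apply sq_le_sq'
    · linarith
    · linarith
  rw [EuclideanSpace.norm_eq, ← Real.sqrt_sq (show 0 ≤ h / 2 by positivity),
    ← Real.sqrt_mul (Nat.cast_nonneg d)]
  refine Real.sqrt_le_sqrt ((Finset.sum_le_sum fun i _ => hi i).trans ?_)
  simp

theorem norm_sub_gridReflect_le (d : ℕ) {h : ℝ} (hh : 0 < h) (x : Euc d) :
    ‖x - gridReflect d h x‖ ≤ √d * h := by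
  rw [sub_gridReflect, norm_smul, Real.norm_ofNat]
  linarith [norm_sub_gridSnap_le d hh x]

theorem measurable_gridSnap (d : ℕ) (h : ℝ) : Measurable (gridSnap d h) := by
  refine (EuclideanSpace.equiv (Fin d) ℝ).symm.continuous.measurable.comp ?_
  fun_prop

/-- Quantitative continuity of the weighted pairing `(a, p) ↦ ⟪a, v⟫ * p`. -/
theorem abs_inner_mul_sub_inner_mul_le {E : Type*} [NormedAddCommGroup E] [InnerProductSpace ℝ E]
    {a b v : E} {p q B C δ ε r : ℝ} (hb : ‖b‖ ≤ B) (hp : |p| ≤ C) (hab : ‖a - b‖ ≤ δ)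
    (hpq : |p - q| ≤ ε) (hv : ‖v‖ ≤ r) :
    |⟪a, v⟫ * p - ⟪b, v⟫ * q| ≤ (δ * C + B * ε) * r := by
  have hr : 0 ≤ r := (norm_nonneg v).trans hv
  have hδ : 0 ≤ δ := (norm_nonneg _).trans hab
  have hB : 0 ≤ B := (norm_nonneg b).trans hb
  have h1 : |⟪a - b, v⟫| ≤ δ * r :=
    (abs_real_inner_le_norm _ _).trans (by gcongr)
  have h2 : |⟪b, v⟫| ≤ B * r :=
    (abs_real_inner_le_norm _ _).trans (by gcongr)
  calc |⟪a, v⟫ * p - ⟪b, v⟫ * q| = |⟪a - b, v⟫ * p + ⟪b, v⟫ * (p - q)| := by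
        rw [inner_sub_left]; ring_nf
    _ ≤ |⟪a - b, v⟫| * |p| + |⟪b, v⟫| * |p - q| := by
        rw [← abs_mul, ← abs_mul]; exact abs_add_le _ _
    _ ≤ δ * r * C + B * r * ε := by gcongr
    _ = (δ * C + B * ε) * r := by ring

/-- For a bounded `α`-Hölder displacement field `ℓ` and a bounded
`α`-Hölder nonnegative weight `μ`, the midpoint-type cancellation bound
`|∫_{(0,1)^d} ⟨ℓ(x), x − G_h(x)⟩ μ(x) dx| ≤ K h^{1+α}` holds,
with `K` depending only on `d, B, M, C, α`. -/
theorem midpoint_cancellation (d : ℕ) (hd : 1 ≤ d) (α B M C : ℝ)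
    (hα0 : 0 < α) (hα1 : α < 1) (hB : 0 < B) (hM : 0 < M) (hC : 0 < C) :
    ∃ K > (0 : ℝ), ∀ ℓ : Euc d → Euc d, Measurable ℓ →
      (∀ x ∈ unitCube d, ‖ℓ x‖ ≤ B) →
      (∀ x ∈ unitCube d, ∀ y ∈ unitCube d, ‖ℓ x - ℓ y‖ ≤ M * ‖x - y‖ ^ α) →
      ∀ μ : Euc d → ℝ, Measurable μ →
      (∀ x ∈ unitCube d, 0 ≤ μ x ∧ μ x ≤ C) →
      (∀ x ∈ unitCube d, ∀ y ∈ unitCube d, |μ x - μ y| ≤ C * ‖x - y‖ ^ α) →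
      ∀ h : ℝ, 0 < h → h ≤ 1 → (∃ L : ℕ, 0 < L ∧ h = 1 / L) →
        |(∫ x in unitCube d, ⟪ℓ x, x - gridSnap d h x⟫ * μ x)|
          ≤ K * h ^ (1 + α) := by
  have hs : 0 < √(d : ℝ) := Real.sqrt_pos.2 (by exact_mod_cast hd)
  set s := √(d : ℝ)
  refine ⟨(M * C + B * C) * s ^ α * s, by positivity, ?_⟩
  rintro ℓ hℓm hℓB hℓM μ hμm hμC hμH h hh - ⟨L, hL0, hL⟩
  have hL1 : h * L = 1 := by
    have : (L : ℝ) ≠ 0 := by positivity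
    rw [hL]; field_simp
  set ν := (volume : Measure (Euc d)).restrict (unitCube d) with hν
  have : IsProbabilityMeasure ν := ⟨by simp [hν, volume_unitCube]⟩
  set F : Euc d → ℝ := fun x => ⟪ℓ x, x - gridSnap d h x⟫ * μ x with hF
  have hR := measurePreserving_gridReflect_unitCube d hh hL1
  have hFm : Measurable F :=
    (hℓm.inner (measurable_id.sub (measurable_gridSnap d h))).mul hμm
  have hcube : ∀ᵐ x ∂ν, x ∈ unitCube d := ae_restrict_mem (measurableSet_unitCube d)
  have hFi : Integrable F ν := by
    refine Integrable.of_bound hFm.aestronglyMeasurable (B * (s * (h / 2)) * C) ?_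
    filter_upwards [hcube] with x hx
    rw [Real.norm_eq_abs, abs_mul, abs_of_nonneg (hμC x hx).1]
    have h1 := (abs_real_inner_le_norm (ℓ x) (x - gridSnap d h x)).trans
      (mul_le_mul (hℓB x hx) (norm_sub_gridSnap_le d hh x) (norm_nonneg _) hB.le)
    exact mul_le_mul h1 (hμC x hx).2 (hμC x hx).1 (by positivity)
  have hFR : ∫ x, F (gridReflect d h x) ∂ν = ∫ x, F x ∂ν := by
    rw [← integral_map hR.aemeasurable hFm.aestronglyMeasurable, hR.map_eq]
  have hFRi : Integrable (fun x => F (gridReflect d h x)) ν := hR.integrable_comp_of_integrable hFi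
  have hbound : ‖∫ x, F x + F (gridReflect d h x) ∂ν‖
      ≤ (M * (s * h) ^ α * C + B * (C * (s * h) ^ α)) * (s * (h / 2)) * ν.real Set.univ := by
    refine norm_integral_le_of_norm_le_const ?_
    filter_upwards [hcube, hR.quasiMeasurePreserving.ae hcube,
      ae_restrict_of_ae (gridSnap_gridReflect_ae_eq d hh)] with x hx hRx hG
    have hpow : ‖x - gridReflect d h x‖ ^ α ≤ (s * h) ^ α :=
      Real.rpow_le_rpow (norm_nonneg _) (norm_sub_gridReflect_le d hh x) hα0.le
    have hneg : gridReflect d h x - gridSnap d h x = -(x - gridSnap d h x) := by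
      have := sub_gridReflect d h x
      rw [two_smul] at this
      rw [← sub_sub_cancel x (gridReflect d h x), this]
      abel
    have hsum : F x + F (gridReflect d h x) = ⟪ℓ x, x - gridSnap d h x⟫ * μ x
        - ⟪ℓ (gridReflect d h x), x - gridSnap d h x⟫ * μ (gridReflect d h x) := by
      simp only [hF, hG, hneg, inner_neg_right]
      ring
    rw [Real.norm_eq_abs, hsum]
    refine abs_inner_mul_sub_inner_mul_le (hℓB _ hRx) ?_ ?_ ?_ (norm_sub_gridSnap_le d hh x)
    · rw [abs_of_nonneg (hμC x hx).1]
      exact (hμC x hx).2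
    · exact (hℓM x hx _ hRx).trans (by gcongr)
    · exact (hμH x hx _ hRx).trans (by gcongr)
  rw [integral_add hFi hFRi, hFR, probReal_univ, mul_one, Real.norm_eq_abs, ← two_mul, abs_mul,
    abs_two, Real.mul_rpow hs.le hh.le] at hbound
  rw [Real.rpow_add hh, Real.rpow_one]
  have hpos : 0 ≤ (M * C + B * C) * s ^ α * s * (h * h ^ α) := by positivity
  linarith
end
end

section
/- Let d, L, k be positive integers and let Ḡ^d_{1/L} ⊂ (0,1)^d denote the set of L^d centers of the cells of the regular grid 𝒢_{1/L}. Let P = Σ_{x ∈ Ḡ^d_{1/L}} p_x δ_x and Q = Σ_{x ∈ Ḡ^d_{1/L}} q_x δ_x be probability measures supported on Ḡ^d_{1/L} such that every p_x and every q_x is a nonnegative integer multiple of 1/k. Then k·L²·W₂²(P,Q) is a nonnegative integer; equivalently, there exists m ∈ ℕ with W₂²(P,Q) = m/(k·L²), and moreover the infimum defining W₂²(P,Q) is attained by a coupling all of whose atom masses are integer multiples of 1/k. -/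
open MeasureTheory
open scoped ENNReal RealInnerProductSpace

noncomputable section

/-- The center of the grid cell of `𝒢_{1/L}` indexed by `a : Fin d → Fin L`,
namely the point with coordinates `(2 aᵢ + 1)/(2L)`. -/
def gridCenter (d L : ℕ) (a : Fin d → Fin L) : Euc d :=
  (EuclideanSpace.equiv (Fin d) ℝ).symm fun i => (2 * (a i : ℝ) + 1) / (2 * L)

section EmpiricalMeasure

variable {E : Type*} [MeasurableSpace E] {k : ℕ}

/-- The uniform probability measure on the family of points `X`, counted with multiplicity. -/
def empiricalMeasure (X : Fin k → E) : Measure E :=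
  (k : ℝ≥0∞)⁻¹ • ∑ i, Measure.dirac (X i)

lemma empiricalMeasure_apply (X : Fin k → E) {s : Set E} (hs : MeasurableSet s) :
    empiricalMeasure X s = (k : ℝ≥0∞)⁻¹ * ∑ i, s.indicator 1 (X i) := by
  simp [empiricalMeasure, Measure.dirac_apply' _ hs]

lemma isProbabilityMeasure_empiricalMeasure (hk : 0 < k) (X : Fin k → E) :
    IsProbabilityMeasure (empiricalMeasure X) := by
  constructor
  rw [empiricalMeasure_apply X MeasurableSet.univ]
  simpa using ENNReal.inv_mul_cancel (by exact_mod_cast hk.ne') (ENNReal.natCast_ne_top k)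

lemma map_empiricalMeasure {F : Type*} [MeasurableSpace F] (X : Fin k → E) {f : E → F}
    (hf : Measurable f) : (empiricalMeasure X).map f = empiricalMeasure (f ∘ X) := by
  ext s hs
  rw [Measure.map_apply hf hs, empiricalMeasure_apply _ (hf hs), empiricalMeasure_apply _ hs]
  rfl

lemma empiricalMeasure_comp_perm (X : Fin k → E) (σ : Equiv.Perm (Fin k)) :
    empiricalMeasure (X ∘ σ) = empiricalMeasure X := by
  simp only [empiricalMeasure, Function.comp_apply]
  rw [Equiv.sum_comp σ fun i => Measure.dirac (X i)]

lemma integral_empiricalMeasure [MeasurableSingletonClass E] (X : Fin k → E) (c : E → ℝ) :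
    ∫ x, c x ∂empiricalMeasure X = (k : ℝ)⁻¹ * ∑ i, c (X i) := by
  rw [empiricalMeasure, integral_smul_measure,
    integral_finsetSum_measure fun i _ => integrable_dirac (by simp)]
  simp

open Classical in
lemma empiricalMeasure_singleton [MeasurableSingletonClass E] (X : Fin k → E) (x : E) :
    empiricalMeasure X {x} = (Finset.card {i | X i = x} : ℝ≥0∞) / k := by
  rw [empiricalMeasure_apply X (measurableSet_singleton x), ENNReal.div_eq_inv_mul]
  simp [Set.indicator_apply]

lemma ae_mem_range_empiricalMeasure [MeasurableSingletonClass E] (X : Fin k → E) :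
    ∀ᵐ x ∂empiricalMeasure X, x ∈ Set.range X := by
  rw [ae_iff]
  change empiricalMeasure X (Set.range X)ᶜ = 0
  rw [empiricalMeasure_apply X (Set.finite_range X).measurableSet.compl]
  simp

open Classical in
/-- A sum over the values of `X`, as a sum over the indices weighted by inverse multiplicities. -/
lemma sum_image_eq_sum_div_card {ι α : Type*} [Fintype ι] (X : ι → α) (h : α → ℝ) :
    ∑ x ∈ Finset.univ.image X, h x = ∑ i, h (X i) / Finset.card {j | X j = X i} := by
  refine Finset.sum_image' _ fun i _ => ?_
  have hcard : (Finset.card {j | X j = X i} : ℝ) ≠ 0 := by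
    have : i ∈ ({j | X j = X i} : Finset ι) := by simp
    exact_mod_cast (Finset.card_pos.mpr ⟨i, this⟩).ne'
  calc h (X i) = ∑ j ∈ {j | X j = X i}, h (X i) / Finset.card {j | X j = X i} := by
        rw [Finset.sum_const, nsmul_eq_mul, mul_div_cancel₀ _ hcard]
    _ = _ := Finset.sum_congr rfl fun j hj => by
        rw [(Finset.mem_filter.mp hj).2]

/-- A probability measure with finitely many atoms, all of whose masses are multiples of `1/k`,
is the empirical measure of `k` points. -/
lemma exists_sum_dirac_eq_empiricalMeasure {α : Type*} [Fintype α] (hk : 0 < k) (x : α → E)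
    (p : α → ℕ)
    (hp : IsProbabilityMeasure (∑ a, ((p a : ℝ≥0∞) / k) • Measure.dirac (x a))) :
    ∃ f : Fin k → α,
      ∑ a, ((p a : ℝ≥0∞) / k) • Measure.dirac (x a) = empiricalMeasure (x ∘ f) := by
  have hk0 : (k : ℝ≥0∞) ≠ 0 := by exact_mod_cast hk.ne'
  have hsum : ∑ a, p a = k := by
    have h := hp.measure_univ
    simp only [Measure.coe_finsetSum, Measure.coe_smul, Finset.sum_apply, Pi.smul_apply,
      measure_univ, smul_eq_mul, mul_one, ENNReal.div_eq_inv_mul, ← Finset.mul_sum] at h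
    rw [← ENNReal.div_eq_inv_mul, ENNReal.div_eq_one_iff hk0 (ENNReal.natCast_ne_top k)] at h
    exact_mod_cast h
  have e : Fin k ≃ Σ a, Fin (p a) := Fintype.equivOfCardEq (by simp [hsum])
  refine ⟨fun i => (e i).1, ?_⟩
  simp only [empiricalMeasure, Function.comp_apply]
  rw [Equiv.sum_comp e fun z => Measure.dirac (x z.1), Fintype.sum_sigma, Finset.smul_sum]
  refine Finset.sum_congr rfl fun a _ => ?_
  dsimp only
  rw [Finset.sum_const, Finset.card_univ, Fintype.card_fin, ← Nat.cast_smul_eq_nsmul ℝ≥0∞,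
    smul_smul, ENNReal.div_eq_inv_mul]

variable [MeasurableSingletonClass E]

open Classical in
/-- The mass of the atom `(X i, Y j)` split evenly over all pairs of indices representing it,
rescaled by `k`. -/
def couplingMatrix (X Y : Fin k → E) (γ : Measure (E × E)) : Matrix (Fin k) (Fin k) ℝ :=
  fun i j => k * (γ.real {(X i, Y j)} /
    (Finset.card {i' | X i' = X i} * Finset.card {j' | Y j' = Y j}))

/-- Integrals against a coupling of two empirical measures are finite sums. -/
lemma integral_eq_sum_couplingMatrix (hk : 0 < k) (X Y : Fin k → E) (γ : Measure (E × E))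
    [IsFiniteMeasure γ] (hX : γ.map Prod.fst = empiricalMeasure X)
    (hY : γ.map Prod.snd = empiricalMeasure Y) (c : E × E → ℝ) :
    ∫ z, c z ∂γ = (k : ℝ)⁻¹ * ∑ i, ∑ j, couplingMatrix X Y γ i j * c (X i, Y j) := by
  classical
  have hfst : ∀ᵐ z ∂γ, z.1 ∈ Set.range X :=
    ae_of_ae_map measurable_fst.aemeasurable (hX ▸ ae_mem_range_empiricalMeasure X)
  have hsnd : ∀ᵐ z ∂γ, z.2 ∈ Set.range Y :=
    ae_of_ae_map measurable_snd.aemeasurable (hY ▸ ae_mem_range_empiricalMeasure Y)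
  have hmem : ∀ᵐ z ∂γ, z ∈ (↑(Finset.univ.image X ×ˢ Finset.univ.image Y) : Set (E × E)) := by
    filter_upwards [hfst, hsnd] with z h₁ h₂
    simpa using And.intro h₁ h₂
  have hsum := setIntegral_finset (μ := γ) (f := c)
    (Finset.univ.image X ×ˢ Finset.univ.image Y) IntegrableOn.finset
  rw [Measure.restrict_eq_self_of_ae_mem hmem] at hsum
  rw [hsum, Finset.sum_product, sum_image_eq_sum_div_card X, Finset.mul_sum]
  refine Finset.sum_congr rfl fun i _ => ?_
  rw [sum_image_eq_sum_div_card Y, Finset.sum_div, Finset.mul_sum]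
  refine Finset.sum_congr rfl fun j _ => ?_
  have hk' : (k : ℝ) ≠ 0 := by exact_mod_cast hk.ne'
  simp only [couplingMatrix, smul_eq_mul]
  rw [mul_assoc, inv_mul_cancel_left₀ hk', div_div, mul_comm (Finset.card _ : ℝ),
    mul_div_right_comm]

lemma couplingMatrix_mem_doublyStochastic (hk : 0 < k) (X Y : Fin k → E) (γ : Measure (E × E))
    [IsFiniteMeasure γ] (hX : γ.map Prod.fst = empiricalMeasure X)
    (hY : γ.map Prod.snd = empiricalMeasure Y) :
    couplingMatrix X Y γ ∈ doublyStochastic ℝ (Fin k) := by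
  classical
  have hk' : (k : ℝ) ≠ 0 := by exact_mod_cast hk.ne'
  have hcard (Z : Fin k → E) (i : Fin k) : (Finset.card {i' | Z i' = Z i} : ℝ) ≠ 0 := by
    have : i ∈ ({i' | Z i' = Z i} : Finset (Fin k)) := by simp
    exact_mod_cast (Finset.card_pos.mpr ⟨i, this⟩).ne'
  have hint (Z : Fin k → E) (i : Fin k) :
      ∫ x, (if x = Z i then (1 : ℝ) else 0) ∂empiricalMeasure Z =
        (k : ℝ)⁻¹ * Finset.card {i' | Z i' = Z i} := by
    simp [integral_empiricalMeasure]
  have hmeas (x : E) : Measurable fun y : E => if y = x then (1 : ℝ) else 0 :=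
    Measurable.ite (measurableSet_singleton x) measurable_const measurable_const
  rw [mem_doublyStochastic_iff_sum]
  refine ⟨fun i j => by unfold couplingMatrix; positivity, fun i => ?_, fun j => ?_⟩
  · have h := hint X i
    rw [← hX, integral_map measurable_fst.aemeasurable (hmeas _).aestronglyMeasurable,
      integral_eq_sum_couplingMatrix hk X Y γ hX hY] at h
    have h' := mul_left_cancel₀ (inv_ne_zero hk') h
    simp only [mul_ite, mul_one, mul_zero] at h'
    have hrow (i' : Fin k) : ∑ j, (if X i' = X i then couplingMatrix X Y γ i' j else 0) =
        if X i' = X i then ∑ j, couplingMatrix X Y γ i j else 0 := by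
      split_ifs with hi
      · simp only [couplingMatrix, hi]
      · simp
    rw [Finset.sum_congr rfl fun i' _ => hrow i', ← Finset.sum_filter, Finset.sum_const,
      nsmul_eq_mul] at h'
    exact mul_left_cancel₀ (hcard X i) (h'.trans (mul_one _).symm)
  · have h := hint Y j
    rw [← hY, integral_map measurable_snd.aemeasurable (hmeas _).aestronglyMeasurable,
      integral_eq_sum_couplingMatrix hk X Y γ hX hY, Finset.sum_comm] at h
    have h' := mul_left_cancel₀ (inv_ne_zero hk') h
    simp only [mul_ite, mul_one, mul_zero] at h'
    have hcol (j' : Fin k) : ∑ i, (if Y j' = Y j then couplingMatrix X Y γ i j' else 0) =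
        if Y j' = Y j then ∑ i, couplingMatrix X Y γ i j else 0 := by
      split_ifs with hj
      · simp only [couplingMatrix, hj]
      · simp
    rw [Finset.sum_congr rfl fun j' _ => hcol j', ← Finset.sum_filter, Finset.sum_const,
      nsmul_eq_mul] at h'
    exact mul_left_cancel₀ (hcard Y j) (h'.trans (mul_one _).symm)

/-- If every assignment costs at least `m`, so does every doubly stochastic matrix. -/
lemma le_sum_mul_of_mem_doublyStochastic {n : Type*} [Fintype n] [DecidableEq n]
    {M : Matrix n n ℝ} (hM : M ∈ doublyStochastic ℝ n) (c : n → n → ℝ) {m : ℝ}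
    (hm : ∀ σ : Equiv.Perm n, m ≤ ∑ i, c i (σ i)) : m ≤ ∑ i, ∑ j, M i j * c i j := by
  obtain ⟨w, hw, hw1, rfl⟩ := exists_eq_sum_perm_of_mem_doublyStochastic hM
  have hperm (σ : Equiv.Perm n) :
      ∑ i, ∑ j, (w σ • σ.permMatrix ℝ) i j * c i j = w σ * ∑ i, c i (σ i) := by
    simp [PEquiv.toMatrix_apply, Equiv.toPEquiv_apply, Finset.mul_sum]
  calc m = ∑ σ, w σ * m := by rw [← Finset.sum_mul, hw1, one_mul]
    _ ≤ ∑ σ, w σ * ∑ i, c i (σ i) := by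
        gcongr with σ
        · exact hw σ
        · exact hm σ
    _ = ∑ σ, ∑ i, ∑ j, (w σ • σ.permMatrix ℝ) i j * c i j := by simp only [hperm]
    _ = _ := by
        rw [Finset.sum_comm]
        refine Finset.sum_congr rfl fun i _ => ?_
        rw [Finset.sum_comm]
        refine Finset.sum_congr rfl fun j _ => ?_
        rw [Matrix.sum_apply, Finset.sum_mul]

/-- Among all couplings of two empirical measures with the same number of points, the transport
cost is minimised by a coupling induced by a permutation. -/
theorem exists_perm_forall_coupling_le (hk : 0 < k) (X Y : Fin k → E) (c : E × E → ℝ) :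
    ∃ σ : Equiv.Perm (Fin k), ∀ γ : Measure (E × E), IsFiniteMeasure γ →
      γ.map Prod.fst = empiricalMeasure X → γ.map Prod.snd = empiricalMeasure Y →
      ∫ z, c z ∂empiricalMeasure (fun i => (X i, Y (σ i))) ≤ ∫ z, c z ∂γ := by
  obtain ⟨σ, hσ⟩ := Finite.exists_min fun σ : Equiv.Perm (Fin k) => ∑ i, c (X i, Y (σ i))
  refine ⟨σ, fun γ _ hX hY => ?_⟩
  rw [integral_empiricalMeasure, integral_eq_sum_couplingMatrix hk X Y γ hX hY]
  exact mul_le_mul_of_nonneg_left (le_sum_mul_of_mem_doublyStochastic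
    (couplingMatrix_mem_doublyStochastic hk X Y γ hX hY) (fun i j => c (X i, Y j)) hσ)
    (by positivity)

end EmpiricalMeasure

lemma norm_gridCenter_sub_sq (d L : ℕ) (a b : Fin d → Fin L) :
    ∃ m : ℕ, ‖gridCenter d L a - gridCenter d L b‖ ^ 2 = (m : ℝ) / (L : ℝ) ^ 2 := by
  refine ⟨∑ i, (((a i : ℕ) : ℤ) - ((b i : ℕ) : ℤ)).natAbs ^ 2, ?_⟩
  rw [EuclideanSpace.norm_sq_eq, Nat.cast_sum, Finset.sum_div]
  refine Finset.sum_congr rfl fun i _ => ?_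
  have hL : (L : ℝ) ≠ 0 := by exact_mod_cast ((Nat.zero_le _).trans_lt (a i).isLt).ne'
  have hdiff : (gridCenter d L a - gridCenter d L b) i = ((a i : ℝ) - (b i : ℝ)) / L := by
    simp only [gridCenter, PiLp.sub_apply, PiLp.continuousLinearEquiv_symm_apply]
    field_simp
    ring
  rw [hdiff, Real.norm_eq_abs, sq_abs, div_pow, Nat.cast_pow, Nat.cast_natAbs, Int.cast_abs,
    sq_abs]
  push_cast
  rfl

/-- If `P` and `Q` are probability measures supported on the `L^d`
grid-cell centers of `(0,1)^d` whose atom masses are nonnegative integer multiples of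
`1/k`, then `k L² W₂²(P,Q)` is a nonnegative integer, i.e. `W₂²(P,Q) = m/(k L²)` for
some `m ∈ ℕ`; moreover the infimum defining `W₂²(P,Q)` is attained by a coupling all
of whose atom masses are integer multiples of `1/k`. -/
theorem grid_W2sq_rational (d L k : ℕ) (hd : 0 < d) (hL : 0 < L) (hk : 0 < k)
    (p q : (Fin d → Fin L) → ℕ)
    (P Q : Measure (Euc d))
    (hP : P = ∑ a : Fin d → Fin L, ((p a : ℝ≥0∞) / k) • Measure.dirac (gridCenter d L a))
    (hQ : Q = ∑ a : Fin d → Fin L, ((q a : ℝ≥0∞) / k) • Measure.dirac (gridCenter d L a))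
    (hPprob : IsProbabilityMeasure P) (hQprob : IsProbabilityMeasure Q) :
    (∃ m : ℕ, W2sq P Q = (m : ℝ) / ((k : ℝ) * (L : ℝ) ^ 2)) ∧
    ∃ γ ∈ Couplings P Q,
      (∫ z, ‖z.1 - z.2‖ ^ 2 ∂γ) = W2sq P Q ∧
      ∀ z : Euc d × Euc d, ∃ m : ℕ, γ {z} = (m : ℝ≥0∞) / k := by
  obtain ⟨f, hf⟩ := exists_sum_dirac_eq_empiricalMeasure hk (gridCenter d L) p (hP ▸ hPprob)
  obtain ⟨g, hg⟩ := exists_sum_dirac_eq_empiricalMeasure hk (gridCenter d L) q (hQ ▸ hQprob)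
  rw [hf] at hP
  rw [hg] at hQ
  obtain ⟨σ, hσ⟩ := exists_perm_forall_coupling_le hk (gridCenter d L ∘ f) (gridCenter d L ∘ g)
    fun z : Euc d × Euc d => ‖z.1 - z.2‖ ^ 2
  set γ : Measure (Euc d × Euc d) :=
    empiricalMeasure fun i => ((gridCenter d L ∘ f) i, (gridCenter d L ∘ g) (σ i)) with hγ
  have hmem : γ ∈ Couplings P Q := by
    refine ⟨isProbabilityMeasure_empiricalMeasure hk _, ?_, ?_⟩
    · rw [hγ, map_empiricalMeasure _ measurable_fst, hP]
      rfl
    · rw [hγ, map_empiricalMeasure _ measurable_snd, hQ,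
        ← empiricalMeasure_comp_perm (gridCenter d L ∘ g) σ]
      rfl
  have hmin : IsLeast {r | ∃ γ ∈ Couplings P Q, r = ∫ p, ‖p.1 - p.2‖ ^ 2 ∂γ}
      (∫ z, ‖z.1 - z.2‖ ^ 2 ∂γ) := by
    refine ⟨⟨γ, hmem, rfl⟩, ?_⟩
    rintro _ ⟨γ', ⟨hprob, hfst, hsnd⟩, rfl⟩
    exact hσ γ' inferInstance (hfst.trans hP) (hsnd.trans hQ)
  have hW : W2sq P Q = ∫ z, ‖z.1 - z.2‖ ^ 2 ∂γ := hmin.csInf_eq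
  refine ⟨?_, γ, hmem, hW.symm, fun z => ⟨_, empiricalMeasure_singleton _ z⟩⟩
  choose m hm using norm_gridCenter_sub_sq d L
  refine ⟨∑ i, m (f i) (g (σ i)), ?_⟩
  rw [hW, hγ, integral_empiricalMeasure]
  simp only [Function.comp_apply, hm]
  rw [← Finset.sum_div, Nat.cast_sum, ← div_eq_inv_mul, div_div, mul_comm (k : ℝ)]
end
end
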